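/- Let P and Q be Borel probability measures on ℝ with finite p-th moment for some p ∈ [1,∞) (∫|x|^p dP < ∞ and ∫|x|^p dQ < ∞) and with P atomless. Let h : ℝ → [0,∞) be a strictly convex, nonnegative, Borel measurable function, and consider the cost c(x,y) = h(x−y). Then the map T = F_Q⁻¹ ∘ F_P, where F_P is the cdf of P and F_Q⁻¹ is the quantile function of Q, satisfies T_#P = Q and minimizes S ↦ ∫ h(x − S(x)) dP(x) over all measurable maps S : ℝ → ℝ with S_#P = Q; moreover, any measurable S with S_#P = Q achieving the same (finite) minimal value equals T P-almost everywhere. -/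

import Mathlib

/-!
Let `g` be the right derivative of the convex function `h`. Since `h` is a primitive of `g`,
`h t - inf h = ∫_{r ≤ t} g⁺ dr + ∫_{r > t} g⁻ dr`. Putting `t = x - S x` and `r = x - u`, Tonelli
writes the cost of `S`, up to the constant `inf h`, as the integral over `u` of
`∫_{S ≤ u} g⁺(x - u) dP(x) + ∫_{S > u} g⁻(x - u) dP(x)`.

For fixed `u` the law of `S` prescribes the mass of `{S ≤ u}`. As `g` is monotone, the sets of that
mass giving the least value are the lower sets, and for a map that is monotone on a set of full
measure `{S ≤ u}` is a lower set up to a null set: it is therefore optimal for every `u` at once.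
When `h` is strictly convex, `g` is strictly increasing and, `P` being atomless, the minimizing set
is unique up to null sets. An optimal map of finite cost then has the same sets `{S ≤ u}` as the
monotone one for almost every `u`, hence agrees with it almost everywhere.

The map `F_Q⁻¹ ∘ F_P` is monotone on `{0 < F_P < 1}`, and it carries `P` to `Q` by way of the
uniform law on `(0, 1)`.
-/

open MeasureTheory ENNReal

/-- The cumulative distribution function of a measure `P` on `ℝ`. -/
noncomputable def cdfFun (P : MeasureTheory.Measure ℝ) (x : ℝ) : ℝ :=
  (P (Set.Iic x)).toReal

/-- The generalized inverse (quantile function) of the cdf of `Q`: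
`F_Q⁻¹ p = inf {x : ℝ | F_Q x ≥ p}`. -/
noncomputable def quantileFun (Q : MeasureTheory.Measure ℝ) (p : ℝ) : ℝ :=
  sInf {x : ℝ | p ≤ cdfFun Q x}

open Classical in
/-- The cost `∫_s g⁺ dμ + ∫_{sᶜ} g⁻ dμ` of selecting the set `s`. It is `∫_s g dμ` up to the
constant `∫ g⁻ dμ`, in a form that makes sense when `g` is not integrable. -/
noncomputable def selectionCost {α : Type*} [MeasurableSpace α] (μ : Measure α) (g : α → ℝ)
    (s : Set α) : ℝ≥0∞ :=
  ∫⁻ x, (if x ∈ s then ENNReal.ofReal (g x) else ENNReal.ofReal (-g x)) ∂μ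

section SelectionCost

variable {α : Type*} [MeasurableSpace α] {μ : Measure α} {g : α → ℝ} {s t : Set α}

theorem tendsto_selectionCost_restrict {ι : Type*} {l : Filter ι} [l.IsCountablyGenerated]
    {φ : ι → Set α} (hg : Measurable g) (hs : MeasurableSet s) (hφ : AECover μ l φ) :
    Filter.Tendsto (fun i => selectionCost (μ.restrict (φ i)) g s) l
      (nhds (selectionCost μ g s)) := by
  classical
  refine hφ.lintegral_tendsto_of_countably_generated (Measurable.aemeasurable ?_)
  exact Measurable.ite hs hg.ennreal_ofReal hg.neg.ennreal_ofReal

theorem selectionCost_congr (hst : s =ᵐ[μ] t) : selectionCost μ g s = selectionCost μ g t := by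
  classical
  unfold selectionCost
  refine lintegral_congr_ae ?_
  filter_upwards [hst] with x hx
  exact if_congr hx.to_iff rfl rfl

theorem ofReal_add_ofReal_neg_of_le {a b : ℝ} (hab : a ≤ b) :
    ENNReal.ofReal b + ENNReal.ofReal (-a) =
      ENNReal.ofReal (-b) + ENNReal.ofReal |b - a| + ENNReal.ofReal a := by
  have hmax : ∀ r : ℝ, ENNReal.ofReal r = ENNReal.ofReal (max r 0) := fun r => by simp
  rw [hmax b, hmax (-a), hmax (-b), hmax a, abs_of_nonneg (sub_nonneg.2 hab),
    ← ENNReal.ofReal_add (by simp) (by simp),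
    ← ENNReal.ofReal_add (by simp) (sub_nonneg.2 hab),
    ← ENNReal.ofReal_add (add_nonneg (by simp) (sub_nonneg.2 hab)) (by simp)]
  congr 1
  linarith [posPart_sub_negPart a, posPart_sub_negPart b, posPart_def a, posPart_def b,
    negPart_def a, negPart_def b]

open Classical in
theorem selectionCost_eq_add_lintegral_symmDiff [IsFiniteMeasure μ] (hg : Measurable g)
    (hs : MeasurableSet s) (ht : MeasurableSet t) (hμ : μ s = μ t) {a : ℝ}
    (hle : ∀ x ∈ t, g x ≤ a) (hge : ∀ x ∉ t, a ≤ g x) :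
    selectionCost μ g s =
      selectionCost μ g t + ∫⁻ x in symmDiff s t, ENNReal.ofReal |g x - a| ∂μ := by
  -- Replacing `g` by `g - a` shifts both costs by the same amount, as `μ s = μ t`; the terms in
  -- `a⁺` and `a⁻` are moved to opposite sides so that no subtraction occurs in `ℝ≥0∞`.
  have hpointwise : ∀ x, (if x ∈ s then ENNReal.ofReal (g x) else ENNReal.ofReal (-g x)) +
      t.indicator (fun _ => ENNReal.ofReal a) x + s.indicator (fun _ => ENNReal.ofReal (-a)) x =
      (if x ∈ t then ENNReal.ofReal (g x) else ENNReal.ofReal (-g x)) +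
      (symmDiff s t).indicator (fun x => ENNReal.ofReal |g x - a|) x +
      s.indicator (fun _ => ENNReal.ofReal a) x + t.indicator (fun _ => ENNReal.ofReal (-a)) x := by
    intro x
    by_cases hxs : x ∈ s <;> by_cases hxt : x ∈ t
    · simp [hxs, hxt, Set.mem_symmDiff]
    · simpa [hxs, hxt, Set.mem_symmDiff] using ofReal_add_ofReal_neg_of_le (hge x hxt)
    · have hneg := ofReal_add_ofReal_neg_of_le (neg_le_neg (hle x hxt))
      rw [neg_sub_neg, abs_sub_comm] at hneg
      simpa [hxs, hxt, Set.mem_symmDiff] using hneg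
    · simp [hxs, hxt, Set.mem_symmDiff]
  have hd : MeasurableSet (symmDiff s t) := hs.symmDiff ht
  have habs : Measurable fun x => ENNReal.ofReal |g x - a| := by fun_prop
  have hint := lintegral_congr (μ := μ) hpointwise
  rw [lintegral_add_right _ (measurable_const.indicator hs),
    lintegral_add_right _ (measurable_const.indicator ht),
    lintegral_add_right _ (measurable_const.indicator ht),
    lintegral_add_right _ (measurable_const.indicator hs),
    lintegral_add_right _ (habs.indicator hd),
    lintegral_indicator_const ht, lintegral_indicator_const hs,
    lintegral_indicator_const hs, lintegral_indicator_const ht, lintegral_indicator hd, hμ,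
    ENNReal.add_left_inj (ENNReal.mul_ne_top ENNReal.ofReal_ne_top (measure_ne_top _ _)),
    ENNReal.add_left_inj (ENNReal.mul_ne_top ENNReal.ofReal_ne_top (measure_ne_top _ _))] at hint
  exact hint

theorem exists_selectionCost_eq_add_of_isLowerSet [LinearOrder α] [IsFiniteMeasure μ]
    (hlower : IsLowerSet t) (hg : Measurable g) (hmono : Monotone g) (hs : MeasurableSet s)
    (ht : MeasurableSet t) (hμ : μ s = μ t) : ∃ a : ℝ, selectionCost μ g s =
      selectionCost μ g t + ∫⁻ x in symmDiff s t, ENNReal.ofReal |g x - a| ∂μ := by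
  have hae : s =ᵐ[μ] t → selectionCost μ g s =
      selectionCost μ g t + ∫⁻ x in symmDiff s t, ENNReal.ofReal |g x - 0| ∂μ := fun hst => by
    rw [setLIntegral_measure_zero _ _ (measure_symmDiff_eq_zero_iff.2 hst), add_zero,
      selectionCost_congr hst]
  rcases t.eq_empty_or_nonempty with rfl | hne
  · exact ⟨0, hae (ae_eq_empty.2 (hμ.trans measure_empty))⟩
  rcases tᶜ.eq_empty_or_nonempty with huniv | hne'
  · obtain rfl := Set.compl_empty_iff.1 huniv
    exact ⟨0, hae ((ae_eq_univ_iff_measure_eq hs.nullMeasurableSet).2 hμ)⟩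
  obtain ⟨a, hupper, hlow⟩ := exists_between_of_forall_le (hne.image g) (hne'.image g) (by
    rintro _ ⟨x, hx, rfl⟩ _ ⟨y, hy, rfl⟩
    exact hmono (le_of_not_ge fun hyx => hy (hlower hyx hx)))
  exact ⟨a, selectionCost_eq_add_lintegral_symmDiff hg hs ht hμ
    (fun x hx => hupper ⟨x, hx, rfl⟩) fun x hx => hlow ⟨x, hx, rfl⟩⟩

theorem selectionCost_le_of_isLowerSet [LinearOrder α] [IsFiniteMeasure μ]
    (hlower : IsLowerSet t) (hg : Measurable g) (hmono : Monotone g) (hs : MeasurableSet s)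
    (ht : MeasurableSet t) (hμ : μ s = μ t) : selectionCost μ g t ≤ selectionCost μ g s := by
  obtain ⟨a, heq⟩ := exists_selectionCost_eq_add_of_isLowerSet hlower hg hmono hs ht hμ
  exact heq ▸ le_self_add

theorem ae_eq_of_selectionCost_eq [LinearOrder α] [IsFiniteMeasure μ]
    [NullSingletonClass μ] (hlower : IsLowerSet t) (hg : Measurable g) (hmono : StrictMono g)
    (hs : MeasurableSet s) (ht : MeasurableSet t) (hμ : μ s = μ t)
    (heq : selectionCost μ g s = selectionCost μ g t) (hfin : selectionCost μ g t ≠ ⊤) :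
    s =ᵐ[μ] t := by
  obtain ⟨a, hadd⟩ := exists_selectionCost_eq_add_of_isLowerSet hlower hg hmono.monotone hs ht hμ
  have hzero : ∫⁻ x in symmDiff s t, ENNReal.ofReal |g x - a| ∂μ = 0 :=
    (ENNReal.add_right_inj hfin).1 (by rw [← hadd, heq, add_zero])
  rw [setLIntegral_eq_zero_iff (hs.symmDiff ht) (by fun_prop)] at hzero
  have hne : ∀ᵐ x ∂μ, g x ≠ a := by
    have hsub : (g ⁻¹' {a}).Subsingleton := Set.subsingleton_singleton.preimage hmono.injective
    exact measure_eq_zero_iff_ae_notMem.1 (hsub.measure_zero μ)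
  refine measure_symmDiff_eq_zero_iff.1 (measure_eq_zero_iff_ae_notMem.2 ?_)
  filter_upwards [hzero, hne] with x hx hxa hmem
  exact hxa (sub_eq_zero.1 (abs_nonpos_iff.1 (ENNReal.ofReal_eq_zero.1 (hx hmem))))

end SelectionCost

section ConvexFunction

variable {h : ℝ → ℝ}

/-- The right derivative of `h : ℝ → ℝ`. A convex `h` has one at every point, and is a primitive of
it. -/
noncomputable def rightDeriv (h : ℝ → ℝ) (x : ℝ) : ℝ :=
  derivWithin h (Set.Ioi x) x

theorem monotone_rightDeriv (hconv : ConvexOn ℝ Set.univ h) : Monotone (rightDeriv h) := by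
  have hmono := hconv.monotoneOn_rightDeriv
  rwa [interior_univ, monotoneOn_univ] at hmono

theorem slope_le_rightDeriv (hconv : ConvexOn ℝ Set.univ h) {x y : ℝ} (hxy : x < y) :
    slope h x y ≤ rightDeriv h y :=
  (hconv.slope_le_leftDeriv_of_mem_interior (Set.mem_univ x) (by simp) hxy).trans
    (hconv.leftDeriv_le_rightDeriv_of_mem_interior (by simp))

theorem strictMono_rightDeriv (hconv : StrictConvexOn ℝ Set.univ h) :
    StrictMono (rightDeriv h) := fun x y hxy =>
  (hconv.rightDeriv_lt_slope (Set.mem_univ x) (Set.mem_univ y) hxy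
    (hconv.convexOn.differentiableWithinAt_Ioi_of_mem_interior (by simp))).trans_le
    (slope_le_rightDeriv hconv.convexOn hxy)

theorem intervalIntegrable_rightDeriv (hconv : ConvexOn ℝ Set.univ h) (a b : ℝ) :
    IntervalIntegrable (rightDeriv h) volume a b :=
  ((monotone_rightDeriv hconv).monotoneOn _).intervalIntegrable

theorem integral_rightDeriv (hconv : ConvexOn ℝ Set.univ h) (a b : ℝ) :
    ∫ r in a..b, rightDeriv h r = h b - h a :=
  intervalIntegral.integral_eq_sub_of_hasDeriv_right
    ((hconv.continuousOn isOpen_univ).mono (Set.subset_univ _))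
    (fun _ _ => hconv.hasDerivWithinAt_rightDeriv_of_mem_interior (by simp))
    (intervalIntegrable_rightDeriv hconv a b)

theorem rightDeriv_nonpos_of_le (hconv : ConvexOn ℝ Set.univ h) {x y : ℝ} (hxy : x < y)
    (hle : h y ≤ h x) : rightDeriv h x ≤ 0 := by
  refine (hconv.rightDeriv_le_slope_of_mem_interior (by simp) (Set.mem_univ y) hxy).trans ?_
  rw [slope_def_field]
  exact div_nonpos_of_nonpos_of_nonneg (sub_nonpos.2 hle) (sub_nonneg.2 hxy.le)

theorem rightDeriv_nonneg_of_le (hconv : ConvexOn ℝ Set.univ h) {x y : ℝ} (hxy : x < y)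
    (hle : h x ≤ h y) : 0 ≤ rightDeriv h y := by
  refine le_trans ?_ (slope_le_rightDeriv hconv hxy)
  rw [slope_def_field]
  exact div_nonneg (sub_nonneg.2 hle) (sub_nonneg.2 hxy.le)

theorem setLIntegral_Ioo_ofReal {f : ℝ → ℝ} {a b : ℝ} (hab : a ≤ b)
    (hf : IntervalIntegrable f volume a b) (hf0 : ∀ r ∈ Set.Ioo a b, 0 ≤ f r) :
    ∫⁻ r in Set.Ioo a b, ENNReal.ofReal (f r) = ENNReal.ofReal (∫ r in a..b, f r) := by
  rw [intervalIntegral.integral_of_le hab, integral_Ioc_eq_integral_Ioo,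
    ofReal_integral_eq_lintegral_ofReal (hf.1.mono_set Set.Ioo_subset_Ioc_self)
      (ae_restrict_of_forall_mem measurableSet_Ioo hf0)]

theorem selectionCost_restrict_Icc_of_le {g : ℝ → ℝ} {a b c t : ℝ} (hc : c ∈ Set.Icc a b)
    (ht : t ∈ Set.Icc a b) (hct : c ≤ t) (hg : IntervalIntegrable g volume c t)
    (hleft : ∀ r ∈ Set.Icc a b, r < c → g r ≤ 0) (hright : ∀ r ∈ Set.Icc a b, c < r → 0 ≤ g r) :
    selectionCost (volume.restrict (Set.Icc a b)) g (Set.Iic t) =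
      ENNReal.ofReal (∫ r in c..t, g r) := by
  have hsub : ∀ r ∈ Set.Ioo c t, r ∈ Set.Icc a b := fun r hr =>
    ⟨hc.1.trans hr.1.le, hr.2.le.trans ht.2⟩
  rw [selectionCost, ← lintegral_indicator measurableSet_Icc,
    ← setLIntegral_Ioo_ofReal hct hg fun r hr => hright r (hsub r hr) hr.1,
    ← lintegral_indicator measurableSet_Ioo]
  refine lintegral_congr_ae ?_
  filter_upwards [Measure.ae_ne volume c, Measure.ae_ne volume t] with r hrc hrt
  by_cases hr : r ∈ Set.Icc a b
  · rcases lt_or_gt_of_ne hrc with hlt | hgt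
    · simp [hr, hlt.not_gt, hleft r hr hlt, (hlt.trans_le hct).le]
    · rcases lt_or_gt_of_ne hrt with hlt' | hgt'
      · simp [hr, hgt, hlt', hlt'.le]
      · simp [hr, hgt'.not_ge, hgt'.not_gt, hright r hr hgt]
  · simp [hr, mt (hsub r) hr]

theorem selectionCost_restrict_Icc_of_ge {g : ℝ → ℝ} {a b c t : ℝ} (hc : c ∈ Set.Icc a b)
    (ht : t ∈ Set.Icc a b) (htc : t ≤ c) (hg : IntervalIntegrable g volume t c)
    (hleft : ∀ r ∈ Set.Icc a b, r < c → g r ≤ 0) (hright : ∀ r ∈ Set.Icc a b, c < r → 0 ≤ g r) :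
    selectionCost (volume.restrict (Set.Icc a b)) g (Set.Iic t) =
      ENNReal.ofReal (∫ r in c..t, g r) := by
  have hsub : ∀ r ∈ Set.Ioo t c, r ∈ Set.Icc a b := fun r hr =>
    ⟨ht.1.trans hr.1.le, hr.2.le.trans hc.2⟩
  rw [selectionCost, ← lintegral_indicator measurableSet_Icc, intervalIntegral.integral_symm,
    ← intervalIntegral.integral_neg, ← setLIntegral_Ioo_ofReal (f := fun r => -g r) htc hg.neg
      fun r hr => neg_nonneg.2 (hleft r (hsub r hr) hr.2),
    ← lintegral_indicator measurableSet_Ioo]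
  refine lintegral_congr_ae ?_
  filter_upwards [Measure.ae_ne volume c, Measure.ae_ne volume t] with r hrc hrt
  by_cases hr : r ∈ Set.Icc a b
  · rcases lt_or_gt_of_ne hrc with hlt | hgt
    · rcases lt_or_gt_of_ne hrt with hlt' | hgt'
      · simp [hr, hlt'.not_gt, hlt'.le, hleft r hr hlt]
      · simp [hr, hgt', hlt, hgt'.not_ge]
    · simp [hr, hgt.not_gt, hright r hr hgt, (htc.trans_lt hgt).not_ge]
  · simp [hr, mt (hsub r) hr]

theorem selectionCost_restrict_Icc_rightDeriv (hconv : ConvexOn ℝ Set.univ h) {a b c t : ℝ}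
    (hc : c ∈ Set.Icc a b) (hmin : IsMinOn h (Set.Icc a b) c) (ht : t ∈ Set.Icc a b) :
    selectionCost (volume.restrict (Set.Icc a b)) (rightDeriv h) (Set.Iic t) =
      ENNReal.ofReal (h t - h c) := by
  have hleft : ∀ r ∈ Set.Icc a b, r < c → rightDeriv h r ≤ 0 := fun r hr hrc =>
    rightDeriv_nonpos_of_le hconv hrc (hmin hr)
  have hright : ∀ r ∈ Set.Icc a b, c < r → 0 ≤ rightDeriv h r := fun r hr hcr =>
    rightDeriv_nonneg_of_le hconv hcr (hmin hr)
  have hint := intervalIntegrable_rightDeriv hconv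
  rw [← integral_rightDeriv hconv]
  rcases le_total c t with hct | htc
  · exact selectionCost_restrict_Icc_of_le hc ht hct (hint c t) hleft hright
  · exact selectionCost_restrict_Icc_of_ge hc ht htc (hint t c) hleft hright

theorem exists_isMinOn_Icc (hconv : ConvexOn ℝ Set.univ h) {a b : ℝ} (hab : a ≤ b) :
    ∃ c ∈ Set.Icc a b, IsMinOn h (Set.Icc a b) c :=
  isCompact_Icc.exists_isMinOn (Set.nonempty_Icc.2 hab)
    ((hconv.continuousOn isOpen_univ).mono (Set.subset_univ _))

theorem ofReal_sub_le_selectionCost (hconv : ConvexOn ℝ Set.univ h) (s t : ℝ) :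
    ENNReal.ofReal (h t - h s) ≤ selectionCost volume (rightDeriv h) (Set.Iic t) := by
  obtain ⟨c, hc, hmin⟩ := exists_isMinOn_Icc hconv (min_le_max (a := s) (b := t))
  calc ENNReal.ofReal (h t - h s) ≤ ENNReal.ofReal (h t - h c) :=
        ENNReal.ofReal_le_ofReal (sub_le_sub_left (hmin ⟨min_le_left _ _, le_max_left _ _⟩) _)
    _ = selectionCost (volume.restrict (Set.uIcc s t)) (rightDeriv h) (Set.Iic t) :=
        (selectionCost_restrict_Icc_rightDeriv hconv hc hmin
          ⟨min_le_right _ _, le_max_right _ _⟩).symm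
    _ ≤ selectionCost volume (rightDeriv h) (Set.Iic t) := setLIntegral_le_lintegral _ _

theorem selectionCost_volume_rightDeriv (hconv : ConvexOn ℝ Set.univ h)
    (hbdd : BddBelow (Set.range h)) (t : ℝ) :
    selectionCost volume (rightDeriv h) (Set.Iic t) = ENNReal.ofReal (h t - ⨅ s, h s) := by
  refine le_antisymm ?_ ?_
  · have hcover : AECover volume Filter.atTop fun n : ℕ => Set.Icc (t - n) (t + n) :=
      aecover_Icc
        (Filter.tendsto_atBot_add_const_left _ t
          (Filter.tendsto_neg_atTop_atBot.comp tendsto_natCast_atTop_atTop))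
        (Filter.tendsto_atTop_add_const_left _ t tendsto_natCast_atTop_atTop)
    refine le_of_tendsto' (tendsto_selectionCost_restrict (monotone_rightDeriv hconv).measurable
      measurableSet_Iic hcover) fun n => ?_
    have ht : t ∈ Set.Icc (t - n) (t + n) := by simp
    obtain ⟨c, hc, hmin⟩ := exists_isMinOn_Icc hconv (ht.1.trans ht.2)
    refine (selectionCost_restrict_Icc_rightDeriv hconv hc hmin ht).trans_le ?_
    exact ENNReal.ofReal_le_ofReal (sub_le_sub_left (ciInf_le hbdd c) _)
  · rcases eq_or_ne (selectionCost volume (rightDeriv h) (Set.Iic t)) ⊤ with htop | hfin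
    · simp [htop]
    · rw [ENNReal.ofReal_le_iff_le_toReal hfin, sub_le_comm]
      exact le_ciInf fun s => by
        rw [sub_le_comm, ← ENNReal.ofReal_le_iff_le_toReal hfin]
        exact ofReal_sub_le_selectionCost hconv s t

end ConvexFunction

section Transport

variable {h : ℝ → ℝ} {P : Measure ℝ} {S T : ℝ → ℝ}

/-- The cost `∫ h (x - S x) dP x` of the transport map `S`, for a nonnegative `h`; negative values
of `h` are truncated to `0`. -/
noncomputable def transportCost (h : ℝ → ℝ) (P : Measure ℝ) (S : ℝ → ℝ) : ℝ≥0∞ :=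
  ∫⁻ x, ENNReal.ofReal (h (x - S x)) ∂P

theorem transportCost_congr (hST : S =ᵐ[P] T) : transportCost h P S = transportCost h P T :=
  lintegral_congr_ae (hST.mono fun x hx => by simp only [hx])

open Classical in
theorem measurable_prod_selection_rightDeriv (hconv : ConvexOn ℝ Set.univ h) (hS : Measurable S) :
    Measurable fun z : ℝ × ℝ => if z.1 ∈ S ⁻¹' Set.Iic z.2
      then ENNReal.ofReal (rightDeriv h (z.1 - z.2))
      else ENNReal.ofReal (-rightDeriv h (z.1 - z.2)) := by
  have hderiv : Measurable fun z : ℝ × ℝ => rightDeriv h (z.1 - z.2) :=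
    (monotone_rightDeriv hconv).measurable.comp (measurable_fst.sub measurable_snd)
  exact Measurable.ite (measurableSet_le (hS.comp measurable_fst) measurable_snd)
    hderiv.ennreal_ofReal hderiv.neg.ennreal_ofReal

theorem measurable_selectionCost_preimage_Iic [SFinite P] (hconv : ConvexOn ℝ Set.univ h)
    (hS : Measurable S) :
    Measurable fun u => selectionCost P (fun x => rightDeriv h (x - u)) (S ⁻¹' Set.Iic u) :=
  (measurable_prod_selection_rightDeriv hconv hS).lintegral_prod_left'

theorem transportCost_eq_lintegral_selectionCost [SFinite P] (hconv : ConvexOn ℝ Set.univ h)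
    (hpos : ∀ t, 0 ≤ h t) (hS : Measurable S) :
    transportCost h P S = ENNReal.ofReal (⨅ t, h t) * P Set.univ +
      ∫⁻ u, selectionCost P (fun x => rightDeriv h (x - u)) (S ⁻¹' Set.Iic u) := by
  classical
  have hbdd : BddBelow (Set.range h) := ⟨0, Set.forall_mem_range.2 hpos⟩
  have hsplit : ∀ t, ENNReal.ofReal (h t) = ENNReal.ofReal (⨅ t, h t) +
      selectionCost volume (rightDeriv h) (Set.Iic t) := fun t => by
    rw [selectionCost_volume_rightDeriv hconv hbdd,
      ← ENNReal.ofReal_add (Real.iInf_nonneg hpos) (sub_nonneg.2 (ciInf_le hbdd t)),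
      add_sub_cancel]
  have hsubst : ∀ x, selectionCost volume (rightDeriv h) (Set.Iic (x - S x)) =
      ∫⁻ u, if x ∈ S ⁻¹' Set.Iic u then ENNReal.ofReal (rightDeriv h (x - u))
        else ENNReal.ofReal (-rightDeriv h (x - u)) := fun x => by
    rw [selectionCost, ← lintegral_sub_left_eq_self _ x]
    refine lintegral_congr fun u => if_congr ?_ rfl rfl
    exact sub_le_sub_iff_left x
  rw [transportCost, lintegral_congr fun x => hsplit (x - S x), lintegral_add_left measurable_const,
    lintegral_const, lintegral_congr hsubst,
    lintegral_lintegral_swap (measurable_prod_selection_rightDeriv hconv hS).aemeasurable]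
  rfl

theorem exists_isLowerSet_ae_eq_preimage_Iic {s : Set ℝ} (hs : ∀ᵐ x ∂P, x ∈ s)
    (hT : MonotoneOn T s) (u : ℝ) : ∃ D, IsLowerSet D ∧ T ⁻¹' Set.Iic u =ᵐ[P] D := by
  refine ⟨_, (lowerClosure (T ⁻¹' Set.Iic u ∩ s)).lower, ?_⟩
  filter_upwards [hs] with x hx
  refine propext ⟨fun hxu => subset_lowerClosure ⟨hxu, hx⟩, ?_⟩
  rintro ⟨y, ⟨hyu, hy⟩, hxy⟩
  exact (hT hx hy hxy).trans hyu

theorem ae_eq_of_ae_preimage_Iic_ae_eq [SFinite P] (hS : Measurable S) (hT : Measurable T)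
    (hST : ∀ᵐ u, S ⁻¹' Set.Iic u =ᵐ[P] T ⁻¹' Set.Iic u) : S =ᵐ[P] T := by
  have hmeas : MeasurableSet {z : ℝ × ℝ | S z.2 ≤ z.1 ↔ T z.2 ≤ z.1} :=
    (measurableSet_le (hS.comp measurable_snd) measurable_fst).iff
      (measurableSet_le (hT.comp measurable_snd) measurable_fst)
  have hiff : ∀ᵐ u, ∀ᵐ x ∂P, S x ≤ u ↔ T x ≤ u :=
    hST.mono fun _ hu => hu.mono fun _ hx => hx.to_iff
  filter_upwards [(Measure.ae_ae_comm hmeas).1 hiff] with x hx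
  have hdense : Dense {u | S x ≤ u ↔ T x ≤ u} := Measure.dense_of_ae hx
  by_contra hne
  rcases lt_or_gt_of_ne hne with hlt | hgt
  · obtain ⟨u, hu, hSu, huT⟩ := hdense.exists_between hlt
    exact huT.not_ge (hu.1 hSu.le)
  · obtain ⟨u, hu, hTu, huS⟩ := hdense.exists_between hgt
    exact huS.not_ge (hu.2 hTu.le)

theorem measure_preimage_Iic_eq_of_map_eq (hS : Measurable S) (hT : Measurable T)
    (hST : P.map S = P.map T) (u : ℝ) : P (S ⁻¹' Set.Iic u) = P (T ⁻¹' Set.Iic u) := by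
  rw [← Measure.map_apply hS measurableSet_Iic, ← Measure.map_apply hT measurableSet_Iic, hST]

theorem selectionCost_preimage_Iic_le [IsFiniteMeasure P] {g : ℝ → ℝ} (hg : Monotone g)
    (hS : Measurable S) (hT : Measurable T) (hST : P.map S = P.map T) {s : Set ℝ}
    (hs : ∀ᵐ x ∂P, x ∈ s) (hmono : MonotoneOn T s) (u : ℝ) :
    selectionCost P g (T ⁻¹' Set.Iic u) ≤ selectionCost P g (S ⁻¹' Set.Iic u) := by
  obtain ⟨D, hD, hTD⟩ := exists_isLowerSet_ae_eq_preimage_Iic hs hmono u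
  rw [selectionCost_congr hTD]
  exact selectionCost_le_of_isLowerSet hD hg.measurable hg (hS measurableSet_Iic)
    hD.ordConnected.measurableSet
    ((measure_preimage_Iic_eq_of_map_eq hS hT hST u).trans (measure_congr hTD))

theorem preimage_Iic_ae_eq_of_selectionCost_eq [IsFiniteMeasure P] [NullSingletonClass P]
    {g : ℝ → ℝ} (hg : StrictMono g) (hS : Measurable S) (hT : Measurable T)
    (hST : P.map S = P.map T) {s : Set ℝ} (hs : ∀ᵐ x ∂P, x ∈ s) (hmono : MonotoneOn T s) {u : ℝ}
    (heq : selectionCost P g (S ⁻¹' Set.Iic u) = selectionCost P g (T ⁻¹' Set.Iic u))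
    (hfin : selectionCost P g (T ⁻¹' Set.Iic u) ≠ ⊤) :
    S ⁻¹' Set.Iic u =ᵐ[P] T ⁻¹' Set.Iic u := by
  obtain ⟨D, hD, hTD⟩ := exists_isLowerSet_ae_eq_preimage_Iic hs hmono u
  rw [selectionCost_congr hTD] at heq hfin
  exact (ae_eq_of_selectionCost_eq hD hg.monotone.measurable hg (hS measurableSet_Iic)
    hD.ordConnected.measurableSet
    ((measure_preimage_Iic_eq_of_map_eq hS hT hST u).trans (measure_congr hTD)) heq hfin).trans
    hTD.symm

theorem transportCost_le_of_monotoneOn [IsFiniteMeasure P] (hconv : ConvexOn ℝ Set.univ h)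
    (hpos : ∀ t, 0 ≤ h t) (hS : Measurable S) (hT : Measurable T) (hST : P.map S = P.map T)
    {s : Set ℝ} (hs : ∀ᵐ x ∂P, x ∈ s) (hmono : MonotoneOn T s) :
    transportCost h P T ≤ transportCost h P S := by
  rw [transportCost_eq_lintegral_selectionCost hconv hpos hT,
    transportCost_eq_lintegral_selectionCost hconv hpos hS]
  gcongr with u
  refine selectionCost_preimage_Iic_le (fun x y hxy => ?_) hS hT hST hs hmono u
  exact monotone_rightDeriv hconv (sub_le_sub_right hxy u)

theorem ae_eq_of_transportCost_eq [IsFiniteMeasure P] [NullSingletonClass P]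
    (hconv : StrictConvexOn ℝ Set.univ h) (hpos : ∀ t, 0 ≤ h t) (hS : Measurable S)
    (hT : Measurable T) (hST : P.map S = P.map T) {s : Set ℝ} (hs : ∀ᵐ x ∂P, x ∈ s)
    (hmono : MonotoneOn T s) (heq : transportCost h P S = transportCost h P T)
    (hfin : transportCost h P T ≠ ⊤) : S =ᵐ[P] T := by
  have hg : ∀ u, StrictMono fun x => rightDeriv h (x - u) := fun u x y hxy =>
    strictMono_rightDeriv hconv (sub_lt_sub_right hxy u)
  rw [transportCost_eq_lintegral_selectionCost hconv.convexOn hpos hT] at heq hfin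
  rw [transportCost_eq_lintegral_selectionCost hconv.convexOn hpos hS,
    ENNReal.add_right_inj (ENNReal.mul_ne_top ENNReal.ofReal_ne_top (measure_ne_top _ _))] at heq
  obtain ⟨-, hfinT⟩ := ENNReal.add_ne_top.1 hfin
  have hmeas {R : ℝ → ℝ} (hR : Measurable R) :=
    measurable_selectionCost_preimage_Iic (P := P) hconv.convexOn hR
  have hle : ∀ u, selectionCost P (fun x => rightDeriv h (x - u)) (T ⁻¹' Set.Iic u) ≤
      selectionCost P (fun x => rightDeriv h (x - u)) (S ⁻¹' Set.Iic u) := fun u =>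
    selectionCost_preimage_Iic_le (hg u).monotone hS hT hST hs hmono u
  have hcost := ae_eq_of_ae_le_of_lintegral_le (.of_forall hle) hfinT (hmeas hS).aemeasurable heq.le
  refine ae_eq_of_ae_preimage_Iic_ae_eq hS hT ?_
  filter_upwards [hcost, ae_lt_top (hmeas hT) hfinT] with u hu hlt
  exact preimage_Iic_ae_eq_of_selectionCost_eq (hg u) hS hT hST hs hmono hu.symm hlt.ne

end Transport

section Quantile

open ProbabilityTheory

variable (P Q : Measure ℝ) [IsProbabilityMeasure P] [IsProbabilityMeasure Q]

theorem cdfFun_eq_cdf : cdfFun P = cdf P := by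
  funext x
  rw [cdf_eq_real]
  rfl

theorem quantileFun_le_iff {q : ℝ} (hq : q ∈ Set.Ioo (0 : ℝ) 1) (u : ℝ) :
    quantileFun Q q ≤ u ↔ q ≤ cdf Q u := by
  rw [quantileFun, cdfFun_eq_cdf]
  have hmono := monotone_cdf Q
  have hne : {x : ℝ | q ≤ cdf Q x}.Nonempty :=
    ((tendsto_cdf_atTop Q).eventually_const_lt hq.2).exists.imp fun _ hx => hx.le
  have hbdd : BddBelow {x : ℝ | q ≤ cdf Q x} := by
    obtain ⟨m, hm⟩ := ((tendsto_cdf_atBot Q).eventually_lt_const hq.1).exists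
    exact ⟨m, fun x hx => (hmono.reflect_lt (hm.trans_le hx)).le⟩
  refine ⟨fun hu => ?_, fun hu => csInf_le hbdd hu⟩
  refine ge_of_tendsto (((cdf Q).right_continuous u).mono Set.Ioi_subset_Ici_self) ?_
  filter_upwards [self_mem_nhdsWithin] with v hv
  obtain ⟨x, hx, hxv⟩ := exists_lt_of_csInf_lt hne (lt_of_le_of_lt hu hv)
  exact le_trans hx (hmono hxv.le)

theorem monotoneOn_quantileFun : MonotoneOn (quantileFun Q) (Set.Ioo 0 1) := fun _ hp _ hq hpq =>
  (quantileFun_le_iff Q hp _).2 (hpq.trans ((quantileFun_le_iff Q hq _).1 le_rfl))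

theorem aemeasurable_quantileFun :
    AEMeasurable (quantileFun Q) (volume.restrict (Set.Ioo 0 1)) :=
  aemeasurable_restrict_of_monotoneOn measurableSet_Ioo (monotoneOn_quantileFun Q)

theorem restrict_Ioo_apply_Iic {q : ℝ} (hq : q ≤ 1) :
    volume.restrict (Set.Ioo 0 1) (Set.Iic q) = ENNReal.ofReal q := by
  rw [Measure.restrict_congr_set Ioo_ae_eq_Ioc, Measure.restrict_apply measurableSet_Iic,
    Set.inter_comm, Set.Ioc_inter_Iic, min_eq_right hq, Real.volume_Ioc, sub_zero]

theorem map_quantileFun : (volume.restrict (Set.Ioo 0 1)).map (quantileFun Q) = Q := by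
  have hQ := aemeasurable_quantileFun Q
  have := Measure.isFiniteMeasure_map (volume.restrict (Set.Ioo (0 : ℝ) 1)) (quantileFun Q)
  refine Measure.ext_of_Iic _ _ fun u => ?_
  have hpre : quantileFun Q ⁻¹' Set.Iic u =ᵐ[volume.restrict (Set.Ioo 0 1)]
      Set.Iic (cdf Q u) := by
    filter_upwards [ae_restrict_mem measurableSet_Ioo] with q hq
    exact propext (quantileFun_le_iff Q hq u)
  rw [Measure.map_apply_of_aemeasurable hQ measurableSet_Iic, measure_congr hpre,
    restrict_Ioo_apply_Iic (cdf_le_one Q u), ofReal_cdf]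

theorem continuous_cdf [NullSingletonClass P] : Continuous (cdf P) := by
  rw [continuous_iff_continuousAt]
  intro x
  rw [(monotone_cdf P).continuousAt_iff_leftLim_eq_rightLim, (cdf P).rightLim_eq]
  have hjump := (cdf P).measure_singleton x
  rw [measure_cdf, measure_singleton, eq_comm, ENNReal.ofReal_eq_zero, sub_nonpos] at hjump
  exact le_antisymm ((monotone_cdf P).leftLim_le le_rfl) hjump

theorem measure_cdf_le [NullSingletonClass P] {q : ℝ} (hq : q < 1) :
    P {x | cdf P x ≤ q} = ENNReal.ofReal q := by
  have hcont := continuous_cdf P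
  have hmono := monotone_cdf P
  obtain ⟨m, hm⟩ := ((tendsto_cdf_atTop P).eventually_const_lt hq).exists
  rcases Set.eq_empty_or_nonempty {x | cdf P x ≤ q} with hempty | hne
  · have hq0 : q ≤ 0 := ge_of_tendsto' (tendsto_cdf_atBot P) fun x =>
      (not_le.1 fun hx => hempty.subset hx).le
    rw [hempty, measure_empty, ENNReal.ofReal_of_nonpos hq0]
  · have hbdd : BddAbove {x | cdf P x ≤ q} :=
      ⟨m, fun x hx => (hmono.reflect_lt (hx.trans_lt hm)).le⟩
    obtain ⟨hsup, hub⟩ := (isClosed_le hcont continuous_const).isGreatest_csSup hne hbdd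
    obtain ⟨v, rfl⟩ : ∃ v, cdf P v = q := mem_range_of_exists_le_of_exists_ge hcont hne ⟨m, hm.le⟩
    set b := sSup {x | cdf P x ≤ cdf P v}
    have hIic : {x | cdf P x ≤ cdf P v} = Set.Iic b :=
      Set.Subset.antisymm hub fun x hx => (hmono hx).trans hsup
    rw [hIic, ← ofReal_cdf]
    exact congrArg _ (le_antisymm hsup (hmono (hub (le_refl (cdf P v)))))

theorem map_cdf [NullSingletonClass P] : P.map (cdf P) = volume.restrict (Set.Ioo 0 1) := by
  have hmeas := (monotone_cdf P).measurable
  have := Measure.isFiniteMeasure_map P (cdf P)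
  refine Measure.ext_of_Iic _ _ fun q => ?_
  rw [Measure.map_apply hmeas measurableSet_Iic]
  rcases lt_or_ge q 1 with hq | hq
  · exact (measure_cdf_le P hq).trans (restrict_Ioo_apply_Iic hq.le).symm
  · have huniv : cdf P ⁻¹' Set.Iic q = Set.univ :=
      Set.eq_univ_of_forall fun x => (cdf_le_one P x).trans hq
    have hsub : Set.Ioo (0 : ℝ) 1 ⊆ Set.Iic q := fun r hr => hr.2.le.trans hq
    rw [huniv, measure_univ, Measure.restrict_apply measurableSet_Iic, Set.inter_eq_right.2 hsub]
    simp

theorem ae_cdf_mem_Ioo [NullSingletonClass P] : ∀ᵐ x ∂P, cdf P x ∈ Set.Ioo (0 : ℝ) 1 := by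
  refine ae_of_ae_map (monotone_cdf P).measurable.aemeasurable ?_
  rw [map_cdf]
  exact ae_restrict_mem measurableSet_Ioo

theorem aemeasurable_quantileFun_comp_cdf [NullSingletonClass P] :
    AEMeasurable (quantileFun Q ∘ cdf P) P :=
  (map_cdf P ▸ aemeasurable_quantileFun Q).comp_measurable (monotone_cdf P).measurable

theorem map_quantileFun_comp_cdf [NullSingletonClass P] : P.map (quantileFun Q ∘ cdf P) = Q := by
  have hF := (monotone_cdf P).measurable.aemeasurable (μ := P)
  rw [← AEMeasurable.map_map_of_aemeasurable (map_cdf P ▸ aemeasurable_quantileFun Q) hF, map_cdf,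
    map_quantileFun]

theorem exists_measurable_monotoneOn_ae_eq [NullSingletonClass P] :
    ∃ T : ℝ → ℝ, Measurable T ∧ quantileFun Q ∘ cdf P =ᵐ[P] T ∧
      ∃ s : Set ℝ, (∀ᵐ x ∂P, x ∈ s) ∧ MonotoneOn T s := by
  have hT := aemeasurable_quantileFun_comp_cdf P Q
  refine ⟨hT.mk, hT.measurable_mk, hT.ae_eq_mk,
    {x | cdf P x ∈ Set.Ioo (0 : ℝ) 1 ∧ (quantileFun Q ∘ cdf P) x = hT.mk _ x},
    (ae_cdf_mem_Ioo P).and hT.ae_eq_mk, ?_⟩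
  rintro x ⟨hx, hxT⟩ y ⟨hy, hyT⟩ hxy
  rw [← hxT, ← hyT]
  exact monotoneOn_quantileFun Q hx hy (monotone_cdf P hxy)

end Quantile

theorem monge_optimal_map_on_real_line_general (P Q : Measure ℝ) [IsProbabilityMeasure P]
    [IsProbabilityMeasure Q] [NullSingletonClass P] {h : ℝ → ℝ}
    (hconv : StrictConvexOn ℝ Set.univ h) (hpos : ∀ t, 0 ≤ h t) :
    P.map (quantileFun Q ∘ cdfFun P) = Q ∧
    (∀ S : ℝ → ℝ, Measurable S → P.map S = Q →
      transportCost h P (quantileFun Q ∘ cdfFun P) ≤ transportCost h P S) ∧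
    (∀ S : ℝ → ℝ, Measurable S → P.map S = Q →
      transportCost h P S = transportCost h P (quantileFun Q ∘ cdfFun P) →
      transportCost h P (quantileFun Q ∘ cdfFun P) ≠ ⊤ → S =ᵐ[P] quantileFun Q ∘ cdfFun P) := by
  rw [cdfFun_eq_cdf]
  obtain ⟨T, hT, hae, s, hs, hmono⟩ := exists_measurable_monotoneOn_ae_eq P Q
  have hmap := map_quantileFun_comp_cdf P Q
  have hTQ : P.map T = Q := (Measure.map_congr hae).symm.trans hmap
  rw [transportCost_congr hae]
  refine ⟨hmap, fun S hS hSQ => ?_, fun S hS hSQ heq hfin => ?_⟩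
  · exact transportCost_le_of_monotoneOn hconv.convexOn hpos hS hT (hSQ.trans hTQ.symm) hs hmono
  · exact (ae_eq_of_transportCost_eq hconv hpos hS hT (hSQ.trans hTQ.symm) hs hmono heq
      hfin).trans hae.symm

/-- Corollary 2 of the paper: for Borel probability measures `P`, `Q` on `ℝ` with finite
`p`-th moments (`p ∈ [1,∞)`) and `P` atomless, and a strictly convex, nonnegative, Borel
measurable `h`, the map `T = F_Q⁻¹ ∘ F_P` pushes `P` to `Q`, minimizes
`S ↦ ∫ h (x - S x) dP x` among measurable maps pushing `P` to `Q`, and is the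
`P`-a.e. unique such minimizer (when the minimal value is finite). -/
theorem monge_optimal_map_on_real_line
    (P Q : Measure ℝ) [IsProbabilityMeasure P] [IsProbabilityMeasure Q]
    (p : ℝ) (hp : 1 ≤ p)
    (hPmom : ∫⁻ x, ENNReal.ofReal (|x| ^ p) ∂P ≠ ⊤)
    (hQmom : ∫⁻ x, ENNReal.ofReal (|x| ^ p) ∂Q ≠ ⊤)
    (hP : ∀ x : ℝ, P {x} = 0)
    (h : ℝ → ℝ) (hconv : StrictConvexOn ℝ Set.univ h)
    (hpos : ∀ t : ℝ, 0 ≤ h t) (hmeas : Measurable h) :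
    Measure.map (fun x => quantileFun Q (cdfFun P x)) P = Q ∧
    (∀ S : ℝ → ℝ, Measurable S → Measure.map S P = Q →
      ∫⁻ x, ENNReal.ofReal (h (x - quantileFun Q (cdfFun P x))) ∂P ≤
        ∫⁻ x, ENNReal.ofReal (h (x - S x)) ∂P) ∧
    (∀ S : ℝ → ℝ, Measurable S → Measure.map S P = Q →
      ∫⁻ x, ENNReal.ofReal (h (x - S x)) ∂P =
          ∫⁻ x, ENNReal.ofReal (h (x - quantileFun Q (cdfFun P x))) ∂P →
      ∫⁻ x, ENNReal.ofReal (h (x - quantileFun Q (cdfFun P x))) ∂P ≠ ⊤ →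
      S =ᵐ[P] fun x => quantileFun Q (cdfFun P x)) := by
  have : NullSingletonClass P := ⟨hP⟩
  exact monge_optimal_map_on_real_line_general P Q hconv hpos
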